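/- Let A, B, C be a nondegenerate triangle in the Euclidean plane with side lengths a = dist B C, b = dist C A, c = dist A B, mittenpunkt Mi (barycentric combination of A, B, C with weights (a(b+c−a), b(c+a−b), c(a+b−c))), and medial triangle vertices M₁ = midpoint(B,C), M₂ = midpoint(C,A), M₃ = midpoint(A,B). Then the Gergonne point of the medial triangle — the barycentric combination of M₁, M₂, M₃ with weights ((c+a−b)(a+b−c), (a+b−c)(b+c−a), (b+c−a)(c+a−b)) — equals the mittenpunkt Mi of triangle ABC. -/

import Mathlib

open EuclideanGeometry RealInnerProductSpace

/-- The barycentric combination of three points with weights `u, v, w`. -/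
noncomputable def bary (P Q R : EuclideanSpace ℝ (Fin 2)) (u v w : ℝ) :
    EuclideanSpace ℝ (Fin 2) :=
  (u / (u + v + w)) • P + (v / (u + v + w)) • Q + (w / (u + v + w)) • R

/-- Evaluation of a two-variable real polynomial at a point of the plane. -/
noncomputable def mvEval (f : MvPolynomial (Fin 2) ℝ)
    (p : EuclideanSpace ℝ (Fin 2)) : ℝ :=
  MvPolynomial.eval (fun i => p i) f

theorem stmt16 (A B C : EuclideanSpace ℝ (Fin 2))
    (hABC : AffineIndependent ℝ ![A, B, C])
    (a b c : ℝ) (ha : a = dist B C) (hb : b = dist C A) (hc : c = dist A B)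
    (Mi M₁ M₂ M₃ : EuclideanSpace ℝ (Fin 2))
    (hMi : Mi = bary A B C (a * (b + c - a)) (b * (c + a - b)) (c * (a + b - c)))
    (hM₁ : M₁ = midpoint ℝ B C) (hM₂ : M₂ = midpoint ℝ C A)
    (hM₃ : M₃ = midpoint ℝ A B) :
    bary M₁ M₂ M₃ ((c + a - b) * (a + b - c)) ((a + b - c) * (b + c - a))
      ((b + c - a) * (c + a - b)) = Mi := by
  subst hMi hM₁ hM₂ hM₃
  clear ha hb hc hABC
  have hS : (c + a - b) * (a + b - c) + (a + b - c) * (b + c - a)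
      + (b + c - a) * (c + a - b)
      = a * (b + c - a) + b * (c + a - b) + c * (a + b - c) := by ring
  unfold bary
  rw [hS]
  generalize a * (b + c - a) + b * (c + a - b) + c * (a + b - c) = S
  simp only [midpoint_eq_smul_add, invOf_eq_inv, div_eq_mul_inv]
  module
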